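/- Let μ be an absolutely continuous Borel probability measure on Ω with μ(∂Ω) = 0, let Z be a real-valued function on the Borel probability measures on Ω that is bounded below, and let τ > 0. Then: (i) the infimum over Borel probability measures ν on Ω of Z(ν) + (1/(2τ)) W2²(ν, μ) equals the infimum over Borel measurable maps T : Ω → Ω of Z(T_♯μ) + (1/(2τ)) ∫_Ω ‖T(x) − x‖² dμ(x); (ii) if a Borel measurable map T minimizes the second problem, then ν = T_♯μ minimizes the first problem; (iii) if a Borel probability measure ν minimizes the first problem, then there exists a Borel measurable map T with T_♯μ = ν that minimizes the second problem and satisfies ∫_Ω ‖T(x) − x‖² dμ(x) = W2²(μ, ν). -/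

import Mathlib

open MeasureTheory

/-- Squared Wasserstein distance between Borel probability measures on a subset `Ω` of
Euclidean space: the infimum of the quadratic transport cost over all couplings. -/
noncomputable def W2sq {d : ℕ} {Ω : Set (EuclideanSpace ℝ (Fin d))}
    (α β : Measure Ω) : ℝ :=
  sInf { c : ℝ | ∃ γ : Measure (Ω × Ω), IsProbabilityMeasure γ ∧
    γ.map Prod.fst = α ∧ γ.map Prod.snd = β ∧
    c = ∫ p, ‖(p.1 : EuclideanSpace ℝ (Fin d)) - (p.2 : EuclideanSpace ℝ (Fin d))‖ ^ 2 ∂γ }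

/-- The quadratic transport cost of a map `T : Ω → Ω` with respect to `μ`. -/
noncomputable def transportCost {d : ℕ} {Ω : Set (EuclideanSpace ℝ (Fin d))}
    (T : Ω → Ω) (μ : Measure Ω) : ℝ :=
  ∫ x, ‖(T x : EuclideanSpace ℝ (Fin d)) - (x : EuclideanSpace ℝ (Fin d))‖ ^ 2 ∂μ

/-!
Any map `T` costs at least `W2²(T_♯μ, μ)`, so everything reduces to realising each `ν` as `T_♯μ`
with `T` optimal (Brenier). Expanding the square turns this into maximising `∫ ⟪x, y⟫ ∂γ` over
couplings, whose dual minimises `∫ ψ* ∂μ + ∫ ψ ∂ν` over continuous `ψ`. A minimiser exists by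
Arzelà–Ascoli, since passing to `ψ**` lowers the dual and gives a uniform modulus of continuity.
By Rademacher's theorem and absolute continuity of `μ`, the supremum defining `ψ*(x)` is attained
only at `∇ψ*(x)` for `μ`-almost every `x`. By Danskin's theorem the first variation of the dual in
the direction `h` is then `∫ h ∂ν - ∫ h(∇ψ*) ∂μ`; it vanishes, so `∇ψ*` pushes `μ` to `ν`, and the
equality case of `⟪x, y⟫ ≤ ψ*(x) + ψ(y)` shows that `∇ψ*` is optimal.
-/

open Filter Topology

section Conjugate

variable {X Y : Type*} [TopologicalSpace X] [TopologicalSpace Y] [CompactSpace Y]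

/-- The conjugate `x ↦ sup_y (b (x, y) - ψ y)` of a potential `ψ` with respect to a surplus `b`,
that is, the Legendre transform when `b` is the inner product. For the transport cost `c = -b` it is
the usual `c`-transform up to signs. It takes the junk value `0` when `Y` is empty. -/
noncomputable def surplusConjugate (b : C(X × Y, ℝ)) (ψ : C(Y, ℝ)) : C(X, ℝ) where
  toFun x := ⨆ y, (b (x, y) - ψ y)
  continuous_toFun := by
    have hcont : Continuous fun p : X × Y => b p - ψ p.2 := by fun_prop
    simpa only [Set.image_univ, sSup_range] using
      isCompact_univ.continuous_sSup (f := fun x y => b (x, y) - ψ y) hcont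

/-- The points `y` at which the supremum defining the conjugate at `x` is attained; for the inner
product this is the subdifferential at `x` of the Legendre transform. -/
def contactSet (b : C(X × Y, ℝ)) (ψ : C(Y, ℝ)) (x : X) : Set Y :=
  {y | b (x, y) - ψ y = surplusConjugate b ψ x}

variable {b : C(X × Y, ℝ)} {ψ ψ' : C(Y, ℝ)} {x x' : X} {y : Y}

theorem sub_le_surplusConjugate (b : C(X × Y, ℝ)) (ψ : C(Y, ℝ)) (x : X) (y : Y) :
    b (x, y) - ψ y ≤ surplusConjugate b ψ x :=
  le_ciSup (f := fun y => b (x, y) - ψ y) (isCompact_range (by fun_prop)).bddAbove y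

theorem surplusConjugate_surplusConjugate_le [Nonempty X] [CompactSpace X] (b : C(X × Y, ℝ))
    (ψ : C(Y, ℝ)) (y : Y) :
    surplusConjugate (b.comp .prodSwap) (surplusConjugate b ψ) y ≤ ψ y :=
  ciSup_le fun x => sub_le_comm.1 (sub_le_surplusConjugate b ψ x y)

section Nonempty

variable [Nonempty Y]

theorem contactSet_nonempty (b : C(X × Y, ℝ)) (ψ : C(Y, ℝ)) (x : X) :
    (contactSet b ψ x).Nonempty := by
  have hcont : Continuous fun y => b (x, y) - ψ y := by fun_prop
  obtain ⟨y, -, hy⟩ := isCompact_univ.exists_isMaxOn Set.univ_nonempty hcont.continuousOn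
  exact ⟨y, (sub_le_surplusConjugate b ψ x y).antisymm (ciSup_le fun z => hy (Set.mem_univ z))⟩

theorem surplusConjugate_le_add {c : ℝ} (h : ∀ y, b (x, y) - ψ y ≤ b (x', y) - ψ' y + c) :
    surplusConjugate b ψ x ≤ surplusConjugate b ψ' x' + c :=
  ciSup_le fun y => (h y).trans (by grw [sub_le_surplusConjugate b ψ' x' y])

theorem surplusConjugate_sub_const (b : C(X × Y, ℝ)) (ψ : C(Y, ℝ)) (k : ℝ) (x : X) :
    surplusConjugate b (ψ - .const Y k) x = surplusConjugate b ψ x + k := by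
  refine le_antisymm (surplusConjugate_le_add fun y => ?_) ?_
  · simp only [ContinuousMap.sub_apply, ContinuousMap.const_apply]
    linarith
  · rw [← le_sub_iff_add_le, sub_eq_add_neg]
    refine surplusConjugate_le_add fun y => ?_
    simp only [ContinuousMap.sub_apply, ContinuousMap.const_apply]
    linarith

theorem lipschitzWith_surplusConjugate_apply (b : C(X × Y, ℝ)) (x : X) :
    LipschitzWith 1 fun ψ => surplusConjugate b ψ x := by
  refine LipschitzWith.of_le_add fun ψ ψ' => surplusConjugate_le_add fun y => ?_
  linarith [(abs_le.1 (ContinuousMap.dist_apply_le_dist (f := ψ) (g := ψ') y)).1]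

theorem lipschitzWith_surplusConjugate [CompactSpace X] (b : C(X × Y, ℝ)) :
    LipschitzWith 1 (surplusConjugate b) :=
  LipschitzWith.of_dist_le_mul fun ψ ψ' => (ContinuousMap.dist_le (by positivity)).2 fun x =>
    (lipschitzWith_surplusConjugate_apply b x).dist_le_mul ψ ψ'

theorem abs_surplusConjugate_sub_le_dist (b : C(X × Y, ℝ)) (ψ : C(Y, ℝ)) (x x' : X) :
    |surplusConjugate b ψ x - surplusConjugate b ψ x'| ≤ dist (b.curry x) (b.curry x') := by
  have hb (y : Y) : |b (x, y) - b (x', y)| ≤ dist (b.curry x) (b.curry x') :=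
    ContinuousMap.dist_apply_le_dist (f := b.curry x) (g := b.curry x') y
  refine abs_sub_le_iff.2 ⟨?_, ?_⟩ <;> rw [sub_le_iff_le_add'] <;>
    refine surplusConjugate_le_add fun y => ?_
  · linarith [le_of_abs_le (hb y)]
  · linarith [neg_le_of_abs_le (hb y)]

end Nonempty

theorem tendsto_of_tendsto_comp_of_preimage_eq_singleton {ι Z : Type*} [TopologicalSpace Z]
    [T2Space Z] {f : Y → Z} (hf : Continuous f) {c : Z} (hy : f ⁻¹' {c} = {y}) {l : Filter ι}
    {u : ι → Y} (hu : Tendsto (f ∘ u) l (𝓝 c)) : Tendsto u l (𝓝 y) := by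
  refine isCompact_univ.tendsto_nhds_of_unique_mapClusterPt
    (Eventually.of_forall fun _ => Set.mem_univ _) fun z _ hz => ?_
  have hfz : MapClusterPt (f z) l (f ∘ u) := hz.continuousAt_comp hf.continuousAt
  exact hy.subset (eq_of_nhds_neBot (ClusterPt.mono hfz hu))

theorem tendsto_of_mem_contactSet {ι : Type*} {l : Filter ι} {Ψ : ι → C(Y, ℝ)} {u : ι → Y}
    (hΨ : Tendsto Ψ l (𝓝 ψ)) (hu : ∀ i, u i ∈ contactSet b (Ψ i) x)
    (hy : contactSet b ψ x = {y}) : Tendsto u l (𝓝 y) := by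
  have : Nonempty Y := ⟨y⟩
  have hmax (i : ι) : surplusConjugate b (Ψ i) x + (Ψ i - ψ) (u i) = b (x, u i) - ψ (u i) := by
    rw [← hu i, ContinuousMap.sub_apply]
    ring
  have hconj : Tendsto (fun i => surplusConjugate b (Ψ i) x) l (𝓝 (surplusConjugate b ψ x)) :=
    ((lipschitzWith_surplusConjugate_apply b x).continuous.tendsto ψ).comp hΨ
  have hdiff : Tendsto (fun i => (Ψ i - ψ) (u i)) l (𝓝 0) :=
    squeeze_zero_norm (fun i => (Ψ i - ψ).norm_coe_le_norm (u i))
      (tendsto_iff_norm_sub_tendsto_zero.1 hΨ)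
  refine tendsto_of_tendsto_comp_of_preimage_eq_singleton (f := fun z => b (x, z) - ψ z)
    (by fun_prop) hy ?_
  simpa only [hmax, add_zero, Function.comp_def] using hconj.add hdiff

theorem hasDerivAt_surplusConjugate_add_smul (h : C(Y, ℝ)) (hy : contactSet b ψ x = {y}) :
    HasDerivAt (fun ε : ℝ => surplusConjugate b (ψ + ε • h) x) (-h y) 0 := by
  have : Nonempty Y := ⟨y⟩
  choose u hu using fun ε : ℝ => contactSet_nonempty b (ψ + ε • h) x
  have hu_lim : Tendsto u (𝓝 0) (𝓝 y) :=
    tendsto_of_mem_contactSet (Continuous.tendsto' (by fun_prop) _ _ (by simp)) hu hy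
  have hlower (ε : ℝ) :
      surplusConjugate b ψ x - ε * h y ≤ surplusConjugate b (ψ + ε • h) x := by
    have hyψ : b (x, y) - ψ y = surplusConjugate b ψ x := hy.superset rfl
    have := sub_le_surplusConjugate b (ψ + ε • h) x y
    simp only [ContinuousMap.add_apply, ContinuousMap.smul_apply, smul_eq_mul] at this
    linarith
  have hupper (ε : ℝ) :
      surplusConjugate b (ψ + ε • h) x ≤ surplusConjugate b ψ x - ε * h (u ε) := by
    rw [← hu ε]
    simp only [ContinuousMap.add_apply, ContinuousMap.smul_apply, smul_eq_mul]
    linarith [sub_le_surplusConjugate b ψ x (u ε)]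
  have hsmall : (fun ε => ε * (h y - h (u ε))) =o[𝓝 0] fun ε : ℝ => ε := by
    have hlim : Tendsto (fun ε => h y - h (u ε)) (𝓝 0) (𝓝 0) := by
      simpa using ((h.continuous.tendsto y).comp hu_lim).const_sub (h y)
    simpa using (Asymptotics.isBigO_refl (fun ε : ℝ => ε) (𝓝 0)).mul_isLittleO
      ((Asymptotics.isLittleO_one_iff ℝ).2 hlim)
  rw [hasDerivAt_iff_isLittleO]
  simp only [sub_zero, smul_eq_mul, zero_smul, add_zero]
  refine (Asymptotics.IsBigO.of_bound' (.of_forall fun ε => ?_)).trans_isLittleO hsmall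
  exact abs_le_abs_of_nonneg (by linarith [hlower ε]) (by linarith [hupper ε])

end Conjugate

section Coupling

variable {X Y : Type*} [MeasurableSpace X] [MeasurableSpace Y]

/-- `γ` is a transport plan (coupling) from `μ` to `ν`. -/
structure IsCoupling (γ : Measure (X × Y)) (μ : Measure X) (ν : Measure Y) : Prop where
  fst_eq : γ.fst = μ
  snd_eq : γ.snd = ν

variable {γ : Measure (X × Y)} {μ : Measure X} {ν : Measure Y}

theorem isCoupling_prod [IsProbabilityMeasure μ] [IsProbabilityMeasure ν] :
    IsCoupling (μ.prod ν) μ ν :=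
  ⟨Measure.fst_prod, Measure.snd_prod⟩

theorem isCoupling_map_graph {T : X → Y} (hT : Measurable T) :
    IsCoupling (μ.map fun x => (x, T x)) μ (μ.map T) :=
  ⟨(Measure.fst_map_prodMk hT).trans Measure.map_id, Measure.snd_map_prodMk measurable_id⟩

namespace IsCoupling

theorem swap (h : IsCoupling γ μ ν) : IsCoupling (γ.map Prod.swap) ν μ :=
  ⟨Measure.fst_map_swap.trans h.snd_eq, Measure.snd_map_swap.trans h.fst_eq⟩

theorem isProbabilityMeasure [IsProbabilityMeasure μ] (h : IsCoupling γ μ ν) :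
    IsProbabilityMeasure γ := by
  have : IsProbabilityMeasure (γ.map Prod.fst) := by rwa [← Measure.fst, h.fst_eq]
  exact Measure.isProbabilityMeasure_of_map Prod.fst

theorem integral_comp_fst (h : IsCoupling γ μ ν) {f : X → ℝ} (hf : AEStronglyMeasurable f μ) :
    ∫ p, f p.1 ∂γ = ∫ x, f x ∂μ := by
  obtain rfl := h.fst_eq
  exact (integral_map measurable_fst.aemeasurable hf).symm

theorem integral_comp_snd (h : IsCoupling γ μ ν) {f : Y → ℝ} (hf : AEStronglyMeasurable f ν) :
    ∫ p, f p.2 ∂γ = ∫ y, f y ∂ν := by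
  obtain rfl := h.snd_eq
  exact (integral_map measurable_snd.aemeasurable hf).symm

end IsCoupling

end Coupling

section Duality

theorem integrable_of_compactSpace {X : Type*} [TopologicalSpace X] [CompactSpace X]
    [MeasurableSpace X] [OpensMeasurableSpace X] {μ : Measure X} [IsFiniteMeasure μ] {f : X → ℝ}
    (hf : Continuous f) : Integrable f μ :=
  hf.integrable_of_hasCompactSupport (.of_compactSpace f)

theorem isCompact_setOf_abs_sub_le {Y : Type*} [TopologicalSpace Y] {ω : Y → Y → ℝ}
    (hω : ∀ y, Tendsto (ω y) (𝓝 y) (𝓝 0)) (y₀ : Y) :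
    IsCompact {ψ : C(Y, ℝ) | (∀ y z, |ψ y - ψ z| ≤ ω y z) ∧ ψ y₀ = 0} := by
  refine ArzelaAscoli.isCompact_of_equicontinuous _ ?_ fun y =>
    Metric.equicontinuousAt_of_continuity_modulus (ω y) (hω y) _ <|
      Eventually.of_forall fun z ψ => ψ.2.1 y z
  set S : Set (Y → ℝ) := {f | (∀ y z, |f y - f z| ≤ ω y z) ∧ f y₀ = 0}
  have himage : ContinuousMap.toFun '' {ψ : C(Y, ℝ) | (∀ y z, |ψ y - ψ z| ≤ ω y z) ∧ ψ y₀ = 0} =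
      S := by
    ext f
    refine ⟨?_, fun hf => ⟨⟨f, ?_⟩, hf, rfl⟩⟩
    · rintro ⟨ψ, hψ, rfl⟩
      exact hψ
    · refine continuous_iff_continuousAt.2 fun y => ?_
      refine tendsto_iff_dist_tendsto_zero.2 ?_
      exact squeeze_zero (fun _ => dist_nonneg)
        (fun z => (dist_comm _ _).trans_le (hf.1 y z)) (hω y)
  have hclosed : IsClosed S := by
    simp only [S, Set.ofPred_and, Set.ofPred_forall]
    exact (isClosed_iInter fun y => isClosed_iInter fun z =>
      isClosed_le (by fun_prop) continuous_const).inter (isClosed_eq (by fun_prop) continuous_const)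
  rw [himage]
  refine (isCompact_univ_pi fun y => isCompact_Icc (a := -ω y y₀) (b := ω y y₀)).of_isClosed_subset
    hclosed fun f hf y _ => abs_le.1 ?_
  simpa [hf.2] using hf.1 y y₀

variable {X Y : Type*} [TopologicalSpace X] [CompactSpace X] [MeasurableSpace X]
  [OpensMeasurableSpace X] [TopologicalSpace Y] [CompactSpace Y] [MeasurableSpace Y]

/-- The Kantorovich dual functional for the maximisation of `∫ b ∂γ` over couplings `γ` of `μ`
and `ν`, in which the potential on `X` has already been optimised to the conjugate of `ψ`. -/
noncomputable def kantorovichDual (b : C(X × Y, ℝ)) (μ : Measure X) (ν : Measure Y)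
    (ψ : C(Y, ℝ)) : ℝ :=
  ∫ x, surplusConjugate b ψ x ∂μ + ∫ y, ψ y ∂ν

theorem kantorovichDual_surplusConjugate_surplusConjugate_le [Nonempty X] [Nonempty Y]
    [OpensMeasurableSpace Y] (b : C(X × Y, ℝ)) (μ : Measure X) (ν : Measure Y)
    [IsFiniteMeasure μ] [IsFiniteMeasure ν] (ψ : C(Y, ℝ)) :
    kantorovichDual b μ ν (surplusConjugate (b.comp .prodSwap) (surplusConjugate b ψ)) ≤
      kantorovichDual b μ ν ψ := by
  refine add_le_add ?_ ?_
  · exact integral_mono (integrable_of_compactSpace (map_continuous _))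
      (integrable_of_compactSpace (map_continuous _)) fun x =>
        surplusConjugate_surplusConjugate_le (b.comp .prodSwap) (surplusConjugate b ψ) x
  · exact integral_mono (integrable_of_compactSpace (map_continuous _))
      (integrable_of_compactSpace (map_continuous _)) fun y =>
        surplusConjugate_surplusConjugate_le b ψ y

theorem kantorovichDual_sub_const [Nonempty Y] [OpensMeasurableSpace Y] (b : C(X × Y, ℝ))
    (μ : Measure X) (ν : Measure Y) [IsProbabilityMeasure μ] [IsProbabilityMeasure ν]
    (ψ : C(Y, ℝ)) (k : ℝ) :
    kantorovichDual b μ ν (ψ - .const Y k) = kantorovichDual b μ ν ψ := by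
  simp only [kantorovichDual, surplusConjugate_sub_const, ContinuousMap.sub_apply,
    ContinuousMap.const_apply]
  rw [integral_add (integrable_of_compactSpace (map_continuous _)) (integrable_const k),
    integral_sub (integrable_of_compactSpace (map_continuous _)) (integrable_const k)]
  simp

theorem continuous_integral_continuousMap (μ : Measure X) [IsFiniteMeasure μ] :
    Continuous fun f : C(X, ℝ) => ∫ x, f x ∂μ := by
  refine (LipschitzWith.of_le_add_mul (μ.real Set.univ).toNNReal fun f g => ?_).continuous
  have hfg (x : X) : f x ≤ g x + dist f g := by
    linarith [le_of_abs_le (ContinuousMap.dist_apply_le_dist (f := f) (g := g) x)]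
  calc ∫ x, f x ∂μ ≤ ∫ x, (g x + dist f g) ∂μ :=
        integral_mono (integrable_of_compactSpace (map_continuous f))
          (integrable_of_compactSpace (by fun_prop)) hfg
    _ = ∫ x, g x ∂μ + (μ.real Set.univ).toNNReal * dist f g := by
        rw [integral_add (integrable_of_compactSpace (map_continuous g)) (integrable_const _),
          integral_const, smul_eq_mul, Real.coe_toNNReal _ measureReal_nonneg]

theorem continuous_kantorovichDual [Nonempty Y] [OpensMeasurableSpace Y] (b : C(X × Y, ℝ))
    (μ : Measure X) (ν : Measure Y) [IsFiniteMeasure μ] [IsFiniteMeasure ν] :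
    Continuous (kantorovichDual b μ ν) :=
  ((continuous_integral_continuousMap μ).comp (lipschitzWith_surplusConjugate b).continuous).add
    (continuous_integral_continuousMap ν)

theorem exists_isMinOn_kantorovichDual [Nonempty X] [Nonempty Y] [OpensMeasurableSpace Y]
    (b : C(X × Y, ℝ)) (μ : Measure X) (ν : Measure Y) [IsProbabilityMeasure μ]
    [IsProbabilityMeasure ν] :
    ∃ ψ, IsMinOn (kantorovichDual b μ ν) Set.univ ψ := by
  obtain ⟨y₀⟩ := ‹Nonempty Y›
  have : Nonempty Y := ⟨y₀⟩
  set bs : C(Y × X, ℝ) := b.comp .prodSwap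
  set S : Set C(Y, ℝ) :=
    {ψ | (∀ y z, |ψ y - ψ z| ≤ dist (bs.curry y) (bs.curry z)) ∧ ψ y₀ = 0}
  have hS : IsCompact S := isCompact_setOf_abs_sub_le
    (ω := fun y z => dist (bs.curry y) (bs.curry z))
    (fun y => Continuous.tendsto' (by fun_prop) _ _ (dist_self _)) y₀
  -- Double conjugation followed by subtracting a constant maps into `S` without increasing the
  -- dual functional, so a minimiser over the compact set `S` is a global one.
  have hreduce (ψ : C(Y, ℝ)) : ∃ η ∈ S, kantorovichDual b μ ν η ≤ kantorovichDual b μ ν ψ := by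
    set φ := surplusConjugate bs (surplusConjugate b ψ)
    refine ⟨φ - .const Y (φ y₀), ⟨fun y z => ?_, sub_self _⟩, ?_⟩
    · simpa using abs_surplusConjugate_sub_le_dist bs (surplusConjugate b ψ) y z
    · rw [kantorovichDual_sub_const]
      exact kantorovichDual_surplusConjugate_surplusConjugate_le b μ ν ψ
  obtain ⟨η₀, hη₀, -⟩ := hreduce 0
  obtain ⟨ψ, -, hψ⟩ := hS.exists_isMinOn ⟨η₀, hη₀⟩ (continuous_kantorovichDual b μ ν).continuousOn
  refine ⟨ψ, fun ψ' _ => ?_⟩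
  obtain ⟨η, hη, hle⟩ := hreduce ψ'
  exact (hψ hη).trans hle

theorem hasDerivAt_integral_surplusConjugate_add_smul [OpensMeasurableSpace Y] {b : C(X × Y, ℝ)}
    {μ : Measure X} [IsFiniteMeasure μ] {ψ : C(Y, ℝ)} {T : X → Y} (hT : AEMeasurable T μ)
    (hTψ : ∀ᵐ x ∂μ, contactSet b ψ x = {T x}) (h : C(Y, ℝ)) :
    HasDerivAt (fun ε : ℝ => ∫ x, surplusConjugate b (ψ + ε • h) x ∂μ) (-∫ x, h (T x) ∂μ) 0 := by
  have hlip : ∀ᵐ x ∂μ, LipschitzOnWith (Real.nnabs ‖h‖)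
      (fun ε : ℝ => surplusConjugate b (ψ + ε • h) x) Set.univ := by
    refine .of_forall fun x => ?_
    have : Nonempty Y := ⟨T x⟩
    refine LipschitzOnWith.of_dist_le_mul fun ε _ ε' _ => ?_
    refine ((lipschitzWith_surplusConjugate_apply b x).dist_le_mul _ _).trans_eq ?_
    simp [dist_eq_norm, ← sub_smul, norm_smul, mul_comm]
  rw [← integral_neg]
  exact (hasDerivAt_integral_of_dominated_loc_of_lip univ_mem
    (.of_forall fun ε => (integrable_of_compactSpace (map_continuous _)).aestronglyMeasurable)
    (integrable_of_compactSpace (map_continuous _))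
    (h.continuous.measurable.comp_aemeasurable hT).neg.aestronglyMeasurable hlip
    (integrable_const _) (hTψ.mono fun x hx => hasDerivAt_surplusConjugate_add_smul h hx)).2

theorem hasDerivAt_kantorovichDual_add_smul [OpensMeasurableSpace Y] {b : C(X × Y, ℝ)}
    {μ : Measure X} {ν : Measure Y} [IsFiniteMeasure μ] [IsFiniteMeasure ν] {ψ : C(Y, ℝ)}
    {T : X → Y} (hT : AEMeasurable T μ) (hTψ : ∀ᵐ x ∂μ, contactSet b ψ x = {T x}) (h : C(Y, ℝ)) :
    HasDerivAt (fun ε : ℝ => kantorovichDual b μ ν (ψ + ε • h))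
      (-∫ x, h (T x) ∂μ + ∫ y, h y ∂ν) 0 := by
  have hlinear (ε : ℝ) : ∫ y, (ψ + ε • h) y ∂ν = ∫ y, ψ y ∂ν + ε * ∫ y, h y ∂ν := by
    simp only [ContinuousMap.add_apply, ContinuousMap.smul_apply, smul_eq_mul]
    rw [integral_add (integrable_of_compactSpace (map_continuous ψ))
      ((integrable_of_compactSpace (map_continuous h)).const_mul ε), integral_const_mul]
  refine (hasDerivAt_integral_surplusConjugate_add_smul hT hTψ h).add ?_
  simp only [hlinear]
  exact (hasDerivAt_mul_const _).const_add _

theorem map_eq_of_isMinOn_kantorovichDual [BorelSpace Y] [HasOuterApproxClosed Y]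
    {b : C(X × Y, ℝ)} {μ : Measure X} {ν : Measure Y} [IsFiniteMeasure μ] [IsFiniteMeasure ν]
    {ψ : C(Y, ℝ)} (hψ : IsMinOn (kantorovichDual b μ ν) Set.univ ψ) {T : X → Y}
    (hT : AEMeasurable T μ) (hTψ : ∀ᵐ x ∂μ, contactSet b ψ x = {T x}) : μ.map T = ν := by
  refine ext_of_forall_integral_eq_of_IsFiniteMeasure fun h => ?_
  rw [integral_map hT h.continuous.aestronglyMeasurable]
  have hmin : IsLocalMin (fun ε : ℝ => kantorovichDual b μ ν (ψ + ε • h.toContinuousMap)) 0 :=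
    .of_forall fun ε => by simpa using hψ (Set.mem_univ (ψ + ε • h.toContinuousMap))
  exact neg_add_eq_zero.1
    (hmin.hasDerivAt_eq_zero (hasDerivAt_kantorovichDual_add_smul hT hTψ h.toContinuousMap))

theorem integral_eq_kantorovichDual_map [OpensMeasurableSpace Y] {b : C(X × Y, ℝ)} {μ : Measure X}
    [IsFiniteMeasure μ] {ψ : C(Y, ℝ)} {T : X → Y} (hT : AEMeasurable T μ)
    (hTψ : ∀ᵐ x ∂μ, T x ∈ contactSet b ψ x) :
    ∫ x, b (x, T x) ∂μ = kantorovichDual b μ (μ.map T) ψ := by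
  have hψT : Integrable (fun x => ψ (T x)) μ :=
    (integrable_of_compactSpace (map_continuous ψ)).comp_aemeasurable hT
  rw [kantorovichDual, integral_map hT (map_continuous ψ).aestronglyMeasurable,
    ← integral_add (integrable_of_compactSpace (map_continuous _)) hψT]
  exact integral_congr_ae (hTψ.mono fun x hx => sub_eq_iff_eq_add.1 hx)

variable [OpensMeasurableSpace Y] [OpensMeasurableSpace (X × Y)]

theorem IsCoupling.integral_le_kantorovichDual {γ : Measure (X × Y)} {μ : Measure X}
    {ν : Measure Y} [IsProbabilityMeasure μ] (hγ : IsCoupling γ μ ν) (b : C(X × Y, ℝ))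
    (ψ : C(Y, ℝ)) : ∫ p, b p ∂γ ≤ kantorovichDual b μ ν ψ := by
  have := hγ.isProbabilityMeasure
  have hφ : Continuous fun p : X × Y => surplusConjugate b ψ p.1 := by fun_prop
  have hψ : Continuous fun p : X × Y => ψ p.2 := by fun_prop
  calc ∫ p, b p ∂γ ≤ ∫ p, (surplusConjugate b ψ p.1 + ψ p.2) ∂γ :=
        integral_mono (integrable_of_compactSpace (map_continuous b))
          (integrable_of_compactSpace (hφ.add hψ)) fun p =>
            sub_le_iff_le_add.1 (sub_le_surplusConjugate b ψ p.1 p.2)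
    _ = kantorovichDual b μ ν ψ := by
        rw [integral_add (integrable_of_compactSpace hφ) (integrable_of_compactSpace hψ),
          hγ.integral_comp_fst (map_continuous _).aestronglyMeasurable,
          hγ.integral_comp_snd (map_continuous _).aestronglyMeasurable, kantorovichDual]

end Duality

section Brenier

variable {E : Type*} [NormedAddCommGroup E] [InnerProductSpace ℝ E] {K L : Set E}

/-- The inner product as a surplus between `E` and a subset `L`. Its conjugates are Legendre
transforms of functions extended by `+∞` outside `L`, defined on all of `E` so that they can be
differentiated. -/
def innerSurplus (L : Set E) : C(E × L, ℝ) where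
  toFun p := inner ℝ p.1 p.2
  continuous_toFun := by fun_prop

@[simp]
theorem innerSurplus_apply (x : E) (y : L) : innerSurplus L (x, y) = inner ℝ x (y : E) :=
  rfl

theorem exists_lipschitzWith_surplusConjugate_innerSurplus [CompactSpace L] [Nonempty L]
    (ψ : C(L, ℝ)) : ∃ C, LipschitzWith C (surplusConjugate (innerSurplus L) ψ) := by
  obtain ⟨R, hR⟩ := (isCompact_iff_compactSpace.2 ‹CompactSpace L›).isBounded.exists_norm_le
  refine ⟨R.toNNReal, .of_le_add_mul _ fun x x' => surplusConjugate_le_add fun y => ?_⟩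
  have hy : inner ℝ (x - x') (y : E) ≤ R.toNNReal * dist x x' := by
    rw [dist_eq_norm, mul_comm]
    refine (real_inner_le_norm _ _).trans ?_
    gcongr
    exact (hR y y.2).trans (Real.le_coe_toNNReal R)
  rw [inner_sub_left] at hy
  simp only [innerSurplus_apply]
  linarith

theorem eq_gradient_of_mem_contactSet_innerSurplus [CompleteSpace E] [CompactSpace L]
    {ψ : C(L, ℝ)} {x : E} {y : L}
    (hx : DifferentiableAt ℝ (surplusConjugate (innerSurplus L) ψ) x)
    (hy : y ∈ contactSet (innerSurplus L) ψ x) :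
    (y : E) = gradient (surplusConjugate (innerSurplus L) ψ) x := by
  have hmin : IsLocalMin
      (fun z => surplusConjugate (innerSurplus L) ψ z - innerSL ℝ (y : E) z) x := by
    refine .of_forall fun z => ?_
    have hxy : inner ℝ x (y : E) - ψ y = surplusConjugate (innerSurplus L) ψ x := hy
    have hzy := sub_le_surplusConjugate (innerSurplus L) ψ z y
    simp only [innerSurplus_apply, innerSL_apply_apply, real_inner_comm _ (y : E)] at hzy ⊢
    linarith
  have hderiv := hmin.hasFDerivAt_eq_zero (hx.hasFDerivAt.sub (innerSL ℝ (y : E)).hasFDerivAt)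
  refine (InnerProductSpace.toDual ℝ E).injective ?_
  rw [gradient, LinearIsometryEquiv.apply_symm_apply, sub_eq_zero.1 hderiv]
  rfl

theorem IsCoupling.integral_norm_sub_sq [MeasurableSpace E] [BorelSpace E] [CompactSpace K]
    [CompactSpace L] {γ : Measure (K × L)} {μ : Measure K} {ν : Measure L} [IsProbabilityMeasure μ]
    (hγ : IsCoupling γ μ ν) :
    ∫ p, ‖(p.1 : E) - p.2‖ ^ 2 ∂γ =
      ∫ x : K, ‖(x : E)‖ ^ 2 ∂μ + ∫ y : L, ‖(y : E)‖ ^ 2 ∂ν -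
        2 * ∫ p, inner ℝ (p.1 : E) (p.2 : E) ∂γ := by
  have := hγ.isProbabilityMeasure
  have hfst : Continuous fun p : K × L => ‖(p.1 : E)‖ ^ 2 := by fun_prop
  have hsnd : Continuous fun p : K × L => ‖(p.2 : E)‖ ^ 2 := by fun_prop
  have hinner : Continuous fun p : K × L => 2 * inner ℝ (p.1 : E) (p.2 : E) := by fun_prop
  have hexpand (p : K × L) : ‖(p.1 : E) - p.2‖ ^ 2 =
      ‖(p.1 : E)‖ ^ 2 + ‖(p.2 : E)‖ ^ 2 - 2 * inner ℝ (p.1 : E) (p.2 : E) := by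
    rw [norm_sub_sq_real]
    ring
  simp only [hexpand]
  rw [integral_sub (integrable_of_compactSpace (by fun_prop)) (integrable_of_compactSpace hinner),
    integral_add (integrable_of_compactSpace hfst) (integrable_of_compactSpace hsnd),
    integral_const_mul, hγ.integral_comp_fst (f := fun x : K => ‖(x : E)‖ ^ 2) (by fun_prop),
    hγ.integral_comp_snd (f := fun y : L => ‖(y : E)‖ ^ 2) (by fun_prop)]

variable [FiniteDimensional ℝ E] [MeasurableSpace E] [BorelSpace E]

theorem exists_measurable_contactSet_innerSurplus_eq_singleton [CompactSpace L] [Nonempty L]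
    {vol : Measure E} [vol.IsAddHaarMeasure] {μ : Measure E} (hμ : μ ≪ vol) (ψ : C(L, ℝ)) :
    ∃ T : E → L, Measurable T ∧ ∀ᵐ x ∂μ, contactSet (innerSurplus L) ψ x = {T x} := by
  set φ := surplusConjugate (innerSurplus L) ψ
  obtain ⟨C, hC⟩ := exists_lipschitzWith_surplusConjugate_innerSurplus ψ
  have hdiff : ∀ᵐ x ∂μ, DifferentiableAt ℝ φ x := hμ.ae_le hC.ae_differentiableAt
  have hmeas : Measurable (gradient φ) :=
    (InnerProductSpace.toDual ℝ E).symm.continuous.measurable.comp (measurable_fderiv ℝ φ)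
  have hmem : ∀ᵐ x ∂μ, gradient φ x ∈ L := hdiff.mono fun x hx => by
    obtain ⟨y, hy⟩ := contactSet_nonempty (innerSurplus L) ψ x
    exact eq_gradient_of_mem_contactSet_innerSurplus hx hy ▸ y.2
  obtain ⟨T, hT, hTL, hgrad⟩ := hmeas.aemeasurable.exists_ae_eq_range_subset hmem
    (Set.nonempty_coe_sort.1 ‹_›)
  refine ⟨fun x => ⟨T x, hTL ⟨x, rfl⟩⟩, hT.subtype_mk, ?_⟩
  filter_upwards [hdiff, hgrad] with x hx hgx
  refine (contactSet_nonempty (innerSurplus L) ψ x).subset_singleton_iff.1 fun y hy => ?_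
  exact Subtype.ext ((eq_gradient_of_mem_contactSet_innerSurplus hx hy).trans hgx)

variable [CompactSpace K] [CompactSpace L] {vol : Measure E} [vol.IsAddHaarMeasure]
  {μ : Measure K} [IsProbabilityMeasure μ]

theorem exists_map_eq_forall_integral_inner_le (hμ : μ.map (Subtype.val : K → E) ≪ vol)
    (ν : Measure L) [IsProbabilityMeasure ν] :
    ∃ T : K → L, Measurable T ∧ μ.map T = ν ∧ ∀ γ, IsCoupling γ μ ν →
      ∫ p, inner ℝ (p.1 : E) (p.2 : E) ∂γ ≤ ∫ x, inner ℝ (x : E) (T x : E) ∂μ := by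
  have : Nonempty K := μ.nonempty_of_neZero
  have : Nonempty L := ν.nonempty_of_neZero
  set b : C(K × L, ℝ) := (innerSurplus L).comp (.prodMap ⟨Subtype.val, by fun_prop⟩ (.id L))
  obtain ⟨ψ, hψ⟩ := exists_isMinOn_kantorovichDual b μ ν
  obtain ⟨T, hT, hTψ⟩ := exists_measurable_contactSet_innerSurplus_eq_singleton hμ ψ
  have hTK : Measurable fun x : K => T x := hT.comp measurable_subtype_coe
  have hcontact : ∀ᵐ x : K ∂μ, contactSet b ψ x = {T x} :=
    ae_of_ae_map measurable_subtype_coe.aemeasurable hTψ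
  have hmap : μ.map (fun x : K => T x) = ν :=
    map_eq_of_isMinOn_kantorovichDual hψ hTK.aemeasurable hcontact
  refine ⟨fun x => T x, hTK, hmap, fun γ hγ => ?_⟩
  calc ∫ p, b p ∂γ ≤ kantorovichDual b μ ν ψ := hγ.integral_le_kantorovichDual b ψ
    _ = ∫ x, b (x, T x) ∂μ := by
      rw [← hmap]
      exact (integral_eq_kantorovichDual_map hTK.aemeasurable
        (hcontact.mono fun x hx => hx.superset rfl)).symm

theorem exists_map_eq_forall_integral_norm_sub_sq_le (hμ : μ.map (Subtype.val : K → E) ≪ vol)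
    (ν : Measure L) [IsProbabilityMeasure ν] :
    ∃ T : K → L, Measurable T ∧ μ.map T = ν ∧ ∀ γ, IsCoupling γ μ ν →
      ∫ x, ‖(x : E) - T x‖ ^ 2 ∂μ ≤ ∫ p, ‖(p.1 : E) - p.2‖ ^ 2 ∂γ := by
  obtain ⟨T, hT, hmap, hle⟩ := exists_map_eq_forall_integral_inner_le hμ ν
  refine ⟨T, hT, hmap, fun γ hγ => ?_⟩
  have hgraph : IsCoupling (μ.map fun x => (x, T x)) μ ν := hmap ▸ isCoupling_map_graph hT
  have hintegral {f : K × L → ℝ} (hf : Continuous f) :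
      ∫ p, f p ∂(μ.map fun x => (x, T x)) = ∫ x, f (x, T x) ∂μ :=
    integral_map (measurable_id.prodMk hT).aemeasurable hf.aestronglyMeasurable
  rw [← hintegral (f := fun p => ‖(p.1 : E) - p.2‖ ^ 2) (by fun_prop),
    hgraph.integral_norm_sub_sq, hγ.integral_norm_sub_sq,
    hintegral (f := fun p => inner ℝ (p.1 : E) (p.2 : E)) (by fun_prop)]
  linarith [hle γ hγ]

end Brenier

section Wasserstein

variable {d : ℕ} {Ω : Set (EuclideanSpace ℝ (Fin d))} {α β μ : Measure Ω}

theorem W2sq_nonneg (α β : Measure Ω) : 0 ≤ W2sq α β := by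
  refine Real.sInf_nonneg ?_
  rintro _ ⟨γ, -, -, -, rfl⟩
  positivity

theorem W2sq_le [IsProbabilityMeasure α] {γ : Measure (Ω × Ω)} (hγ : IsCoupling γ α β) :
    W2sq α β ≤ ∫ p, ‖(p.1 : EuclideanSpace ℝ (Fin d)) - p.2‖ ^ 2 ∂γ := by
  refine csInf_le ⟨0, ?_⟩ ⟨γ, hγ.isProbabilityMeasure, hγ.fst_eq, hγ.snd_eq, rfl⟩
  rintro _ ⟨γ', -, -, -, rfl⟩
  positivity

theorem le_W2sq [IsProbabilityMeasure α] [IsProbabilityMeasure β] {c : ℝ}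
    (h : ∀ γ, IsCoupling γ α β → c ≤ ∫ p, ‖(p.1 : EuclideanSpace ℝ (Fin d)) - p.2‖ ^ 2 ∂γ) :
    c ≤ W2sq α β := by
  refine le_csInf
    ⟨_, α.prod β, inferInstance, isCoupling_prod.fst_eq, isCoupling_prod.snd_eq, rfl⟩ ?_
  rintro _ ⟨γ, -, hfst, hsnd, rfl⟩
  exact h γ ⟨hfst, hsnd⟩

theorem W2sq_comm (α β : Measure Ω) [IsProbabilityMeasure α] [IsProbabilityMeasure β] :
    W2sq α β = W2sq β α := by
  have hle (α β : Measure Ω) [IsProbabilityMeasure α] [IsProbabilityMeasure β] :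
      W2sq α β ≤ W2sq β α := by
    refine le_W2sq fun γ hγ => (W2sq_le hγ.swap).trans_eq ?_
    rw [integral_map measurable_swap.aemeasurable
      (Measurable.aestronglyMeasurable (by fun_prop))]
    simp only [Prod.fst_swap, Prod.snd_swap, norm_sub_rev]
  exact (hle α β).antisymm (hle β α)

theorem W2sq_map_le_transportCost [IsProbabilityMeasure μ] {T : Ω → Ω} (hT : Measurable T) :
    W2sq (μ.map T) μ ≤ transportCost T μ := by
  have := Measure.isProbabilityMeasure_map (μ := μ) hT.aemeasurable
  refine (W2sq_le (isCoupling_map_graph hT).swap).trans_eq ?_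
  rw [Measure.map_map measurable_swap (by fun_prop), integral_map (by fun_prop) (by fun_prop)]
  rfl

theorem exists_map_eq_transportCost_eq_W2sq (hΩ : IsCompact Ω) [IsProbabilityMeasure μ]
    (hμ : μ.map (Subtype.val : Ω → EuclideanSpace ℝ (Fin d)) ≪ volume) (ν : Measure Ω)
    [IsProbabilityMeasure ν] :
    ∃ T : Ω → Ω, Measurable T ∧ μ.map T = ν ∧ transportCost T μ = W2sq μ ν := by
  have : CompactSpace Ω := isCompact_iff_compactSpace.1 hΩ
  obtain ⟨T, hT, rfl, hle⟩ := exists_map_eq_forall_integral_norm_sub_sq_le hμ ν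
  refine ⟨T, hT, rfl, le_antisymm (le_W2sq fun γ hγ => ?_) ?_⟩
  · simpa only [transportCost, norm_sub_rev] using hle γ hγ
  · exact (W2sq_comm _ _).trans_le (W2sq_map_le_transportCost hT)

end Wasserstein

theorem stmt2_general {d : ℕ} (Ω : Set (EuclideanSpace ℝ (Fin d))) (hcomp : IsCompact Ω)
    (μ : Measure Ω) (hμ : IsProbabilityMeasure μ)
    (hac : μ.map (Subtype.val : Ω → EuclideanSpace ℝ (Fin d)) ≪ volume)
    (Z : Measure Ω → ℝ) (hZ : BddBelow (Set.range Z)) (τ : ℝ) (hτ : 0 < τ) :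
    (sInf { c : ℝ | ∃ ν : Measure Ω, IsProbabilityMeasure ν ∧
        c = Z ν + (1 / (2 * τ)) * W2sq ν μ }
      = sInf { c : ℝ | ∃ T : Ω → Ω, Measurable T ∧
        c = Z (μ.map T) + (1 / (2 * τ)) * transportCost T μ })
    ∧ (∀ T : Ω → Ω, Measurable T →
        (∀ S : Ω → Ω, Measurable S →
          Z (μ.map T) + (1 / (2 * τ)) * transportCost T μ
            ≤ Z (μ.map S) + (1 / (2 * τ)) * transportCost S μ) →
        ∀ ν' : Measure Ω, IsProbabilityMeasure ν' →
          Z (μ.map T) + (1 / (2 * τ)) * W2sq (μ.map T) μ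
            ≤ Z ν' + (1 / (2 * τ)) * W2sq ν' μ)
    ∧ (∀ ν : Measure Ω, IsProbabilityMeasure ν →
        (∀ ν' : Measure Ω, IsProbabilityMeasure ν' →
          Z ν + (1 / (2 * τ)) * W2sq ν μ ≤ Z ν' + (1 / (2 * τ)) * W2sq ν' μ) →
        ∃ T : Ω → Ω, Measurable T ∧ μ.map T = ν ∧
          (∀ S : Ω → Ω, Measurable S →
            Z (μ.map T) + (1 / (2 * τ)) * transportCost T μ
              ≤ Z (μ.map S) + (1 / (2 * τ)) * transportCost S μ) ∧
          transportCost T μ = W2sq μ ν) := by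
  have hprob {T : Ω → Ω} (hT : Measurable T) : IsProbabilityMeasure (μ.map T) :=
    Measure.isProbabilityMeasure_map hT.aemeasurable
  have hle {T : Ω → Ω} (hT : Measurable T) : Z (μ.map T) + (1 / (2 * τ)) * W2sq (μ.map T) μ ≤
      Z (μ.map T) + (1 / (2 * τ)) * transportCost T μ := by
    grw [W2sq_map_le_transportCost hT]
  have hlift (ν : Measure Ω) (hν : IsProbabilityMeasure ν) : ∃ T : Ω → Ω, Measurable T ∧
      μ.map T = ν ∧ transportCost T μ = W2sq μ ν := exists_map_eq_transportCost_eq_W2sq hcomp hac ν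
  obtain ⟨z, hz⟩ := hZ
  have hbound (ν : Measure Ω) : z ≤ Z ν + (1 / (2 * τ)) * W2sq ν μ :=
    le_add_of_le_of_nonneg (hz (Set.mem_range_self ν))
      (mul_nonneg (by positivity) (W2sq_nonneg ν μ))
  refine ⟨le_antisymm ?_ ?_, fun T hT hmin ν hν => ?_, fun ν hν hmin => ?_⟩
  · refine le_csInf ⟨_, id, measurable_id, rfl⟩ ?_
    rintro _ ⟨T, hT, rfl⟩
    refine le_trans (csInf_le ⟨z, ?_⟩ ⟨μ.map T, hprob hT, rfl⟩) (hle hT)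
    rintro _ ⟨ν, -, rfl⟩
    exact hbound ν
  · refine le_csInf ⟨_, μ, hμ, rfl⟩ ?_
    rintro _ ⟨ν, hν, rfl⟩
    obtain ⟨T, hT, rfl, hTW⟩ := hlift ν hν
    refine csInf_le ⟨z, ?_⟩ ⟨T, hT, by rw [hTW, W2sq_comm]⟩
    rintro _ ⟨S, hS, rfl⟩
    exact (hbound _).trans (hle hS)
  · obtain ⟨S, hS, rfl, hSW⟩ := hlift ν hν
    rw [W2sq_comm (μ.map S), ← hSW]
    exact (hle hT).trans (hmin S hS)
  · obtain ⟨T, hT, rfl, hTW⟩ := hlift ν hν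
    refine ⟨T, hT, rfl, fun S hS => ?_, hTW⟩
    rw [hTW, W2sq_comm μ]
    exact (hmin _ (hprob hS)).trans (hle hS)

theorem stmt2 {d : ℕ} (hd : 1 ≤ d) (Ω : Set (EuclideanSpace ℝ (Fin d)))
    (hconv : Convex ℝ Ω) (hcomp : IsCompact Ω)
    (hfront : volume (frontier Ω) = 0)
    (μ : Measure Ω) (hμ : IsProbabilityMeasure μ)
    (hac : μ.map (Subtype.val : Ω → EuclideanSpace ℝ (Fin d)) ≪ volume)
    (hμfront : μ.map (Subtype.val : Ω → EuclideanSpace ℝ (Fin d)) (frontier Ω) = 0)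
    (Z : Measure Ω → ℝ) (hZ : BddBelow (Set.range Z))
    (τ : ℝ) (hτ : 0 < τ) :
    -- (i) the two infima coincide
    (sInf { c : ℝ | ∃ ν : Measure Ω, IsProbabilityMeasure ν ∧
        c = Z ν + (1 / (2 * τ)) * W2sq ν μ }
      = sInf { c : ℝ | ∃ T : Ω → Ω, Measurable T ∧
        c = Z (μ.map T) + (1 / (2 * τ)) * transportCost T μ })
    -- (ii) a minimizing map yields a minimizing measure
    ∧ (∀ T : Ω → Ω, Measurable T →
        (∀ S : Ω → Ω, Measurable S →
          Z (μ.map T) + (1 / (2 * τ)) * transportCost T μ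
            ≤ Z (μ.map S) + (1 / (2 * τ)) * transportCost S μ) →
        ∀ ν' : Measure Ω, IsProbabilityMeasure ν' →
          Z (μ.map T) + (1 / (2 * τ)) * W2sq (μ.map T) μ
            ≤ Z ν' + (1 / (2 * τ)) * W2sq ν' μ)
    -- (iii) a minimizing measure is induced by a minimizing optimal transport map
    ∧ (∀ ν : Measure Ω, IsProbabilityMeasure ν →
        (∀ ν' : Measure Ω, IsProbabilityMeasure ν' →
          Z ν + (1 / (2 * τ)) * W2sq ν μ ≤ Z ν' + (1 / (2 * τ)) * W2sq ν' μ) →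
        ∃ T : Ω → Ω, Measurable T ∧ μ.map T = ν ∧
          (∀ S : Ω → Ω, Measurable S →
            Z (μ.map T) + (1 / (2 * τ)) * transportCost T μ
              ≤ Z (μ.map S) + (1 / (2 * τ)) * transportCost S μ) ∧
          transportCost T μ = W2sq μ ν) :=
  stmt2_general Ω hcomp μ hμ hac Z hZ τ hτ
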